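/- Let (A_i)_{i∈I} be unital subalgebras of A and (F_j)_{j∈J} subalgebras of F. Then the pair ((A_i)_{i∈I}, (F_j)_{j∈J}) is B′-free in (A, φ, F, Φ) if and only if the family of unital subalgebras of B consisting of A_i (for i ∈ I) and ℂ·1_B + F_j (for j ∈ J), indexed by the disjoint union I ⊔ J, is infinitesimally free with respect to (φ, φ′). -/

import Mathlib

open scoped BigOperators

namespace TypeBPrime

variable {B : Type*} [Ring B] [Algebra ℂ B]

/-- The alternating word `a 0 * (f 0 * a 1) * ⋯ * (f (n-1) * a n)`. -/
def altWord {n : ℕ} (a : Fin (n + 1) → B) (f : Fin n → B) : B :=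
  a 0 * (List.ofFn fun k : Fin n => f k * a k.succ).prod

/-- Cyclic-antimonotone independence of the pair `(A₁, F₁)` with respect to `(φ, Φ)`:
`Φ(a₀ f₁ a₁ ⋯ fₙ aₙ) = φ(a₀ aₙ) · φ(a₁) ⋯ φ(a_{n-1}) · Φ(f₁ ⋯ fₙ)` for all `n ≥ 1`. -/
def CyclicAntimonotone (φ Φ : B → ℂ) (A₁ F₁ : Set B) : Prop :=
  ∀ n : ℕ, 0 < n → ∀ (a : Fin (n + 1) → B) (f : Fin n → B),
    (∀ k, a k ∈ A₁) → (∀ k, f k ∈ F₁) →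
    Φ (altWord a f) =
      φ (a 0 * a (Fin.last n)) *
        (∏ k ∈ Finset.Ioo (0 : Fin (n + 1)) (Fin.last n), φ (a k)) *
        Φ (List.ofFn f).prod

/-- Freeness of a family of subsets with respect to `φ`:
alternating words in centered elements are centered. -/
def IsFreeFamily {ι : Type*} (φ : B → ℂ) (Alg : ι → Set B) : Prop :=
  ∀ (n : ℕ) (idx : Fin (n + 1) → ι) (a : Fin (n + 1) → B),
    (∀ k : Fin n, idx k.castSucc ≠ idx k.succ) →
    (∀ k, a k ∈ Alg (idx k)) → (∀ k, φ (a k) = 0) →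
    φ (List.ofFn a).prod = 0

/-- Infinitesimal freeness of a family of subsets with respect to `(φ, φ')`. -/
def IsInfFree {ι : Type*} (φ φ' : B → ℂ) (Alg : ι → Set B) : Prop :=
  IsFreeFamily φ Alg ∧
  (∀ (n : ℕ) (idx : Fin (n + 1) → ι) (b : Fin (n + 1) → B),
    (∀ k : Fin n, idx k.castSucc ≠ idx k.succ) →
    (∀ k, b k ∈ Alg (idx k)) → (∀ k, φ (b k) = 0) →
    ¬(Even n ∧ ∀ k, idx k = idx k.rev) →
    φ' (List.ofFn b).prod = 0) ∧
  (∀ (m : ℕ) (idx : Fin (2 * m + 1) → ι) (b : Fin (2 * m + 1) → B),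
    (∀ k : Fin (2 * m), idx k.castSucc ≠ idx k.succ) →
    (∀ k, b k ∈ Alg (idx k)) → (∀ k, φ (b k) = 0) →
    (∀ k, idx k = idx k.rev) →
    φ' (List.ofFn b).prod =
      (∏ j : Fin m,
          φ (b (Fin.castLE (by omega) j) * b (Fin.castLE (by omega) j).rev)) *
        φ' (b ⟨m, by omega⟩))

/-- Trivial independence with respect to `Φ`: alternating words of length `≥ 2` vanish. -/
def TrivIndep {ι : Type*} (Φ : B → ℂ) (Fj : ι → Set B) : Prop :=
  ∀ (n : ℕ) (idx : Fin (n + 2) → ι) (f : Fin (n + 2) → B),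
    (∀ k : Fin (n + 1), idx k.castSucc ≠ idx k.succ) →
    (∀ k, f k ∈ Fj (idx k)) →
    Φ (List.ofFn f).prod = 0

/-- Boolean independence with respect to `ψ`. -/
def BoolIndep {ι : Type*} (ψ : B → ℂ) (C : ι → Set B) : Prop :=
  ∀ (n : ℕ) (idx : Fin (n + 1) → ι) (c : Fin (n + 1) → B),
    (∀ k : Fin n, idx k.castSucc ≠ idx k.succ) →
    (∀ k, c k ∈ C (idx k)) →
    ψ (List.ofFn c).prod = ∏ k, ψ (c k)

/-- Conditional freeness with respect to `(φ, ψ)`. -/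
def CFree {ι : Type*} (φ ψ : B → ℂ) (Alg : ι → Set B) : Prop :=
  IsFreeFamily φ Alg ∧
  ∀ (n : ℕ) (idx : Fin (n + 1) → ι) (b : Fin (n + 1) → B),
    (∀ k : Fin n, idx k.castSucc ≠ idx k.succ) →
    (∀ k, b k ∈ Alg (idx k)) → (∀ k, φ (b k) = 0) →
    ψ (List.ofFn b).prod = ∏ k, ψ (b k)

/-- The unital subspace `ℂ·1_B + F₁`. -/
def unitize (F₁ : Set B) : Set B :=
  {x | ∃ c : ℂ, ∃ f ∈ F₁, x = algebraMap ℂ B c + f}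

/-- The set of alternating words `a₀ f₁ a₁ ⋯ fₙ aₙ` with letters from `A₁` and `F₁`. -/
def wordSet (A₁ F₁ : Set B) : Set B :=
  {x | ∃ n : ℕ, 0 < n ∧ ∃ (a : Fin (n + 1) → B) (f : Fin n → B),
    (∀ k, a k ∈ A₁) ∧ (∀ k, f k ∈ F₁) ∧ x = altWord a f}

/-- `A₁⟨F₁⟩₀`: the linear span of all alternating words `a₀ f₁ a₁ ⋯ fₙ aₙ`. -/
def wordSpan (A₁ F₁ : Set B) : Set B :=
  (Submodule.span ℂ (wordSet A₁ F₁) : Submodule ℂ B)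

/-- The type B′ subalgebra `A₁⟨F₁⟩ = A₁ + A₁⟨F₁⟩₀`. -/
def typeBSub (A₁ F₁ : Set B) : Set B :=
  {x | ∃ a ∈ A₁, ∃ f ∈ wordSpan A₁ F₁, x = a + f}

/-- `(tₙ)` is the inverse Markov–Krein transform of the sequence `(mₙ)`:
`(n+1)·mₙ = Σ_{j=0}^{n} tⱼ m_{n−j}` for all `n ≥ 0`. -/
def IsInvMK (m t : ℕ → ℂ) : Prop :=
  ∀ n : ℕ, ((n : ℂ) + 1) * m n = ∑ j ∈ Finset.range (n + 1), t j * m (n - j)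

set_option linter.unusedSectionVars false

section Words

variable {I : Type*}

/-- product of the letters of a word -/
def pr (l : List (I × B)) : B := (l.map Prod.snd).prod

/-- alternating words with letters in `S` -/
def Word (S : I → Set B) (l : List (I × B)) : Prop :=
  l.IsChain (fun p q => p.1 ≠ q.1) ∧ ∀ p ∈ l, p.2 ∈ S p.1

@[simp] lemma pr_nil : pr ([] : List (I × B)) = 1 := rfl
@[simp] lemma pr_cons (p : I × B) (l : List (I × B)) : pr (p :: l) = p.2 * pr l := by
  simp [pr]
@[simp] lemma pr_append (l m : List (I × B)) : pr (l ++ m) = pr l * pr m := by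
  simp [pr]

lemma Word.nil (S : I → Set B) : Word S [] := by simp [Word]

lemma Word.of_subword {S : I → Set B} {l m : List (I × B)} (h : Word S l) (hm : m <:+: l) :
    Word S m :=
  ⟨h.1.infix hm, fun p hp => h.2 p (hm.subset hp)⟩

lemma Word.tail {S : I → Set B} {p : I × B} {l : List (I × B)} (h : Word S (p :: l)) :
    Word S l := h.of_subword (List.suffix_cons p l).isInfix

lemma Word.replace {S : I → Set B} {i : I} {x g : B} {l : List (I × B)}
    (h : Word S ((i, x) :: l)) (hg : g ∈ S i) : Word S ((i, g) :: l) := by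
  obtain ⟨h1, h2⟩ := h
  refine ⟨?_, ?_⟩
  · rw [List.isChain_cons] at h1 ⊢
    exact h1
  · intro p hp
    rcases List.mem_cons.1 hp with rfl | hp
    · exact hg
    · exact h2 p (List.mem_cons_of_mem _ hp)

lemma Word.cons {S : I → Set B} {i : I} {g : B} {q : I × B} {l : List (I × B)}
    (h : Word S (q :: l)) (hg : g ∈ S i) (hne : i ≠ q.1) : Word S ((i, g) :: q :: l) := by
  refine ⟨List.isChain_cons_cons.2 ⟨hne, h.1⟩, ?_⟩
  intro p hp
  rcases List.mem_cons.1 hp with rfl | hp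
  · exact hg
  · exact h.2 p hp

lemma Word.single {S : I → Set B} {i : I} {g : B} (hg : g ∈ S i) : Word S [(i, g)] := by
  refine ⟨by simp, ?_⟩
  simpa using hg

lemma Word.reverse {S : I → Set B} {l : List (I × B)} (h : Word S l) : Word S l.reverse := by
  refine ⟨?_, ?_⟩
  · rw [List.isChain_reverse]
    exact h.1.imp (fun a b hab => hab.symm)
  · intro p hp
    exact h.2 p (List.mem_reverse.1 hp)

/-- gluing two words at a pair of distinct indices -/
lemma Word.glue {S : I → Set B} {x y : List (I × B)} {p q : I × B}
    (hx : Word S (x ++ [p])) (hy : Word S (q :: y)) (hne : p.1 ≠ q.1) :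
    Word S (x ++ [p] ++ q :: y) := by
  refine ⟨?_, ?_⟩
  · rw [List.isChain_append]
    refine ⟨hx.1, hy.1, ?_⟩
    simpa using hne
  · intro r hr
    rcases List.mem_append.1 hr with hr | hr
    · exact hx.2 r hr
    · exact hy.2 r hr

lemma merge_left {S : I → Set B} {i : I} (hmul : ∀ a ∈ S i, ∀ b ∈ S i, a * b ∈ S i)
    {y : List (I × B)} (hy : Word S y) {f : B} (hf : f ∈ S i) :
    ∃ (g : B) (z : List (I × B)), Word S ((i, g) :: z) ∧ f * pr y = pr ((i, g) :: z) := by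
  rcases y with _ | ⟨⟨k, b⟩, z⟩
  · exact ⟨f, [], Word.single hf, by simp⟩
  · by_cases h : i = k
    · subst h
      refine ⟨f * b, z, hy.replace (hmul _ hf _ (hy.2 (i, b) (by simp))), by simp [mul_assoc]⟩
    · exact ⟨f, _, hy.cons hf h, by simp⟩

lemma merge_right {S : I → Set B} {i : I} (hmul : ∀ a ∈ S i, ∀ b ∈ S i, a * b ∈ S i)
    {y : List (I × B)} (hy : Word S y) {f : B} (hf : f ∈ S i) :
    ∃ (g : B) (z : List (I × B)), Word S (z ++ [(i, g)]) ∧ pr y * f = pr (z ++ [(i, g)]) := by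
  rcases List.eq_nil_or_concat y with rfl | ⟨z, ⟨k, b⟩, rfl⟩
  · exact ⟨f, [], Word.single hf, by simp⟩
  · by_cases h : i = k
    · subst h
      refine ⟨b * f, z, ?_, by simp [mul_assoc]⟩
      have h1 := hy.reverse
      simp only [List.concat_eq_append, List.reverse_append, List.reverse_cons, List.reverse_nil,
        List.nil_append, List.singleton_append] at h1
      have h2 := (h1.replace (hmul _ (hy.2 (i, b) (by simp)) _ hf)).reverse
      simpa using h2
    · refine ⟨f, z ++ [(k, b)], ?_, by simp [mul_assoc]⟩
      have := Word.glue (p := (k, b)) (q := (i, f)) (y := []) (by simpa using hy)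
        (Word.single hf) (fun e => h e.symm)
      simpa using this

/-- span of alternating words -/
lemma adjoin_le_span {S : I → Set B}
    (hS : ∀ i, ∀ a ∈ S i, ∀ b ∈ S i, ∃ c : ℂ, ∃ g ∈ S i, a * b = algebraMap ℂ B c + g)
    {x : B} (hx : x ∈ Algebra.adjoin ℂ (⋃ i, S i)) :
    x ∈ Submodule.span ℂ {y | ∃ l, Word S l ∧ y = pr l} := by
  set C := Submodule.span ℂ {y | ∃ l, Word S l ∧ y = pr l} with hC
  have key : ∀ y ∈ C, x * y ∈ C := by
    refine Algebra.adjoin_induction (p := fun x _ => ∀ y ∈ C, x * y ∈ C) ?_ ?_ ?_ ?_ hx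
    · intro x hx y hy
      obtain ⟨i, hi⟩ := Set.mem_iUnion.1 hx
      refine Submodule.span_induction (p := fun y _ => x * y ∈ C) ?_ ?_ ?_ ?_ hy
      · rintro _ ⟨l, hl, rfl⟩
        rcases l with _ | ⟨⟨k, b⟩, z⟩
        · exact Submodule.subset_span ⟨[(i, x)], Word.single hi, by simp⟩
        · by_cases h : i = k
          · subst h
            obtain ⟨c, g, hg, e⟩ := hS i x hi b (hl.2 (i, b) (by simp))
            have : x * pr ((i, b) :: z) = c • pr z + pr ((i, g) :: z) := by
              simp [← mul_assoc, e, add_mul, Algebra.smul_def]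
            rw [this]
            exact C.add_mem (C.smul_mem _ (Submodule.subset_span ⟨z, hl.tail, rfl⟩))
              (Submodule.subset_span ⟨_, hl.replace hg, rfl⟩)
          · exact Submodule.subset_span ⟨_, hl.cons hi h, by simp⟩
      · simp
      · intro a b _ _ ha hb
        rw [mul_add]; exact C.add_mem ha hb
      · intro a b _ hb
        rw [mul_smul_comm]; exact C.smul_mem _ hb
    · intro r y hy
      rw [← Algebra.smul_def]; exact C.smul_mem _ hy
    · intro a b _ _ ha hb y hy
      rw [add_mul]; exact C.add_mem (ha y hy) (hb y hy)
    · intro a b _ _ ha hb y hy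
      rw [mul_assoc]; exact ha _ (hb y hy)
  have := key 1 (Submodule.subset_span ⟨[], Word.nil S, by simp⟩)
  simpa using this

/-- span of non-empty alternating words -/
lemma nonunital_adjoin_le_span {S : I → Set B}
    (hS : ∀ i, ∀ a ∈ S i, ∀ b ∈ S i, a * b ∈ S i)
    {x : B} (hx : x ∈ NonUnitalAlgebra.adjoin ℂ (⋃ i, S i)) :
    x ∈ Submodule.span ℂ {y | ∃ l, Word S l ∧ l ≠ [] ∧ y = pr l} := by
  set C := Submodule.span ℂ {y | ∃ l, Word S l ∧ l ≠ [] ∧ y = pr l} with hC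
  have key : x ∈ C ∧ ∀ y ∈ C, x * y ∈ C := by
    refine NonUnitalAlgebra.adjoin_induction (p := fun x _ => x ∈ C ∧ ∀ y ∈ C, x * y ∈ C)
      ?_ ?_ ?_ ?_ ?_ hx
    · intro x hx
      obtain ⟨i, hi⟩ := Set.mem_iUnion.1 hx
      refine ⟨Submodule.subset_span ⟨[(i, x)], Word.single hi, by simp, by simp⟩, ?_⟩
      intro y hy
      refine Submodule.span_induction (p := fun y _ => x * y ∈ C) ?_ ?_ ?_ ?_ hy
      · rintro _ ⟨l, hl, -, rfl⟩
        obtain ⟨g, z, hz, e⟩ := merge_left (hS i) hl hi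
        exact Submodule.subset_span ⟨_, hz, by simp, e⟩
      · simp
      · intro a b _ _ ha hb
        rw [mul_add]; exact C.add_mem ha hb
      · intro a b _ hb
        rw [mul_smul_comm]; exact C.smul_mem _ hb
    · intro a b _ _ ha hb
      refine ⟨C.add_mem ha.1 hb.1, fun y hy => ?_⟩
      rw [add_mul]; exact C.add_mem (ha.2 y hy) (hb.2 y hy)
    · simp
    · intro a b _ _ ha hb
      refine ⟨ha.2 _ hb.1, fun y hy => ?_⟩
      rw [mul_assoc]; exact ha.2 _ (hb.2 y hy)
    · intro r a _ ha
      refine ⟨C.smul_mem _ ha.1, fun y hy => ?_⟩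
      rw [smul_mul_assoc]; exact C.smul_mem _ (ha.2 y hy)
  exact key.1

/-- centered part of a set -/
def cen (φ : B →ₗ[ℂ] ℂ) (U : I → Set B) : I → Set B := fun i => {b | b ∈ U i ∧ φ b = 0}

/-- list form of freeness -/
def FreeL (φ : B →ₗ[ℂ] ℂ) (S : I → Set B) : Prop :=
  ∀ l, Word S l → l ≠ [] → φ (pr l) = 0

/-- the pairing of two words read from the inside to the outside -/
def pair (φ : B →ₗ[ℂ] ℂ) : List (I × B) → List (I × B) → ℂ
  | p :: u, q :: v => φ (p.2 * q.2) * pair φ u v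
  | _, _ => 1

lemma free_pair (φ : B →ₗ[ℂ] ℂ) (hφ1 : φ 1 = 1) (S : I → Set B)
    (hS : ∀ i, ∀ a ∈ S i, ∀ b ∈ S i, ∃ c : ℂ, ∃ g ∈ S i, a * b = algebraMap ℂ B c + g)
    (h0 : ∀ i, ∀ a ∈ S i, φ a = 0)
    (hfree : FreeL φ S) (u : List (I × B)) : ∀ v : List (I × B), Word S u.reverse → Word S v →
    (u.map Prod.fst = v.map Prod.fst → φ (pr u.reverse * pr v) = pair φ u v) ∧
    (u.map Prod.fst ≠ v.map Prod.fst → φ (pr u.reverse * pr v) = 0) := by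
  induction u with
  | nil =>
    intro v hu hv
    rcases v with _ | ⟨q, v⟩
    · simp [hφ1, pair]
    · simp only [List.reverse_nil, pr_nil, one_mul]
      exact ⟨by simp, fun _ => hfree _ hv (by simp)⟩
  | cons p u ih =>
    intro v hu hv
    rcases v with _ | ⟨q, v⟩
    · simp only [pr_nil, mul_one]
      exact ⟨by simp, fun _ => hfree _ hu (by simp)⟩
    · obtain ⟨i, a⟩ := p
      obtain ⟨k, b⟩ := q
      rw [List.reverse_cons] at hu ⊢
      by_cases hik : i = k
      · subst hik
        have hu' : Word S u.reverse := hu.of_subword (List.prefix_append _ _).isInfix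
        obtain ⟨c, g, hg, e⟩ := hS i a (hu.2 (i, a) (by simp)) b (hv.2 (i, b) (by simp))
        have hc : φ (a * b) = c := by
          rw [e, map_add, h0 i g hg, Algebra.algebraMap_eq_smul_one]; simp [hφ1]
        have hw : Word S (u.reverse ++ (i, g) :: v) := by
          have h1 : Word S (u.reverse ++ [(i, g)]) := by
            have := hu.reverse
            simp only [List.reverse_append, List.reverse_cons, List.reverse_nil,
              List.nil_append, List.singleton_append, List.reverse_reverse] at this
            simpa using (this.replace hg).reverse
          rcases v with _ | ⟨q, v⟩
          · exact h1
          · have := Word.glue h1 hv.tail (List.isChain_cons_cons.1 hv.1).1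
            simpa using this
        have e2 : φ (pr (u.reverse ++ [(i, a)]) * pr ((i, b) :: v))
            = φ (a * b) * φ (pr u.reverse * pr v) := by
          have : pr (u.reverse ++ [(i, a)]) * pr ((i, b) :: v)
              = c • (pr u.reverse * pr v) + pr (u.reverse ++ (i, g) :: v) := by
            have : pr (u.reverse ++ [(i, a)]) * pr ((i, b) :: v)
              = pr u.reverse * ((a * b) * pr v) := by simp [mul_assoc]
            rw [this, e, Algebra.algebraMap_eq_smul_one]
            simp [add_mul, mul_add]
          rw [this, map_add, hfree _ hw (by simp), hc]
          simp
        rw [e2]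
        obtain ⟨i1, i2⟩ := ih v hu' hv.tail
        constructor
        · intro h
          rw [i1 (by simpa using h)]
          rfl
        · intro h
          rw [i2 (by simpa using h), mul_zero]
      · refine ⟨fun h => absurd h (by simp [hik]), fun _ => ?_⟩
        rw [← pr_append]
        exact hfree _ (Word.glue hu hv hik) (by simp)

end Words

section Fin

variable {I : Type*}

open Classical in
/-- right-hand side of the formula of infinitesimal freeness -/
noncomputable def rhs (φ φ' : B →ₗ[ℂ] ℂ) (l : List (I × B)) : ℂ :=
  if Odd l.length ∧ (l.map Prod.fst).reverse = l.map Prod.fst then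
    (∏ j ∈ Finset.range (l.length / 2),
      φ ((l.map Prod.snd).getD j 0 * (l.map Prod.snd).getD (l.length - 1 - j) 0)) *
      φ' ((l.map Prod.snd).getD (l.length / 2) 0)
  else 0

lemma forall_list {α : Type*} {P : List α → Prop} (h : ∀ n (g : Fin n → α), P (List.ofFn g))
    (l : List α) : P l := by
  have := h l.length l.get
  rwa [List.ofFn_get] at this

lemma word_ofFn (φ : B →ₗ[ℂ] ℂ) (U : I → Set B) {n : ℕ} (idx : Fin (n + 1) → I)
    (b : Fin (n + 1) → B) :
    Word (cen φ U) (List.ofFn fun k => (idx k, b k)) ↔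
      (∀ k : Fin n, idx k.castSucc ≠ idx k.succ) ∧
      (∀ k, b k ∈ U (idx k)) ∧ (∀ k, φ (b k) = 0) := by
  unfold Word
  rw [List.isChain_ofFn, List.forall_mem_ofFn_iff]
  simp only [cen, Set.mem_ofPred_eq, forall_and]
  refine and_congr ?_ Iff.rfl
  constructor
  · intro h k
    exact h k.1 (by omega)
  · intro h i hi
    exact h ⟨i, by omega⟩

lemma pr_ofFn {n : ℕ} (idx : Fin n → I) (b : Fin n → B) :
    pr (List.ofFn fun k => (idx k, b k)) = (List.ofFn b).prod := by
  simp [pr, List.map_ofFn, Function.comp_def]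

lemma isFreeFamily_iff (φ : B →ₗ[ℂ] ℂ) (U : I → Set B) :
    IsFreeFamily ⇑φ U ↔ FreeL φ (cen φ U) := by
  constructor
  · intro h
    unfold FreeL
    refine forall_list ?_
    intro n g hw hne
    rcases n with _ | n
    · simp at hne
    · have hg : g = fun k => ((g k).1, (g k).2) := rfl
      rw [hg, word_ofFn] at hw
      have := h n _ _ hw.1 hw.2.1 hw.2.2
      rw [hg, pr_ofFn]
      exact this
  · intro h n idx a h1 h2 h3
    have := h _ ((word_ofFn φ U idx a).2 ⟨h1, h2, h3⟩) (by simp)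
    rwa [pr_ofFn] at this

lemma reverse_ofFn_iff {n : ℕ} (idx : Fin n → I) :
    (List.ofFn idx).reverse = List.ofFn idx ↔ ∀ k, idx k = idx k.rev := by
  have e : (List.ofFn idx).reverse = List.ofFn fun k => idx k.rev := by
    refine List.ext_getElem (by simp) fun i h1 h2 => ?_
    simp only [List.getElem_reverse, List.getElem_ofFn, List.length_ofFn]
    congr 1
    ext
    simp only [Fin.val_rev]
    omega
  rw [e, List.ofFn_inj]
  constructor
  · intro h k
    exact (congrFun h k).symm
  · intro h
    funext k
    exact (h k).symm

lemma rhs_ofFn_neg (φ φ' : B →ₗ[ℂ] ℂ) {n : ℕ} (idx : Fin (n + 1) → I) (b : Fin (n + 1) → B)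
    (h : ¬(Even n ∧ ∀ k, idx k = idx k.rev)) :
    rhs φ φ' (List.ofFn fun k => (idx k, b k)) = 0 := by
  unfold rhs
  rw [if_neg]
  rintro ⟨h1, h2⟩
  rw [List.map_ofFn] at h2
  apply h
  refine ⟨?_, (reverse_ofFn_iff idx).1 h2⟩
  simp only [List.length_ofFn] at h1
  rcases h1 with ⟨m, hm⟩
  exact ⟨m, by omega⟩

lemma getD_ofFn {n : ℕ} (b : Fin n → B) (j : ℕ) (hj : j < n) :
    (List.ofFn b).getD j 0 = b ⟨j, hj⟩ := by
  rw [List.getD_eq_getElem _ _ (by simpa using hj)]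
  simp

lemma rhs_ofFn_pos (φ φ' : B →ₗ[ℂ] ℂ) {m : ℕ} (idx : Fin (2 * m + 1) → I)
    (b : Fin (2 * m + 1) → B) (h : ∀ k, idx k = idx k.rev) :
    rhs φ φ' (List.ofFn fun k => (idx k, b k)) =
      (∏ j : Fin m,
          φ (b (Fin.castLE (by omega) j) * b (Fin.castLE (by omega) j).rev)) *
        φ' (b ⟨m, by omega⟩) := by
  unfold rhs
  rw [if_pos]
  · have hs : (List.ofFn fun k => (idx k, b k)).map Prod.snd = List.ofFn b := by
      simp [List.map_ofFn, Function.comp_def]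
    have hm : (2 * m + 1) / 2 = m := by omega
    rw [hs]
    simp only [List.length_ofFn]
    rw [hm, getD_ofFn b m (by omega), Finset.prod_range]
    congr 1
    refine Finset.prod_congr rfl fun j _ => ?_
    rw [getD_ofFn b j (by omega), getD_ofFn b _ (by omega)]
    congr 3
    ext
    simp [Fin.val_rev]
  · refine ⟨⟨m, by simp⟩, ?_⟩
    rw [List.map_ofFn]
    exact (reverse_ofFn_iff idx).2 h

lemma isInfFree_iff (φ φ' : B →ₗ[ℂ] ℂ) (U : I → Set B) :
    IsInfFree ⇑φ ⇑φ' U ↔ FreeL φ (cen φ U) ∧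
      ∀ l, Word (cen φ U) l → l ≠ [] → φ' (pr l) = rhs φ φ' l := by
  unfold IsInfFree
  rw [isFreeFamily_iff]
  refine and_congr Iff.rfl ?_
  constructor
  · rintro ⟨h2, h3⟩
    refine forall_list ?_
    intro n g hw hne
    rcases n with _ | n
    · simp at hne
    · have hg : g = fun k => ((g k).1, (g k).2) := rfl
      rw [hg, word_ofFn] at hw
      rw [hg, pr_ofFn]
      by_cases hc : Even n ∧ ∀ k, (g k).1 = (g k.rev).1
      · obtain ⟨⟨m, hm⟩, hc⟩ := hc
        obtain rfl : n = 2 * m := by omega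
        rw [rhs_ofFn_pos φ φ' _ _ hc]
        exact h3 m _ _ hw.1 hw.2.1 hw.2.2 hc
      · rw [rhs_ofFn_neg φ φ' _ _ hc]
        exact h2 n _ _ hw.1 hw.2.1 hw.2.2 hc
  · intro h
    refine ⟨?_, ?_⟩
    · intro n idx b h1 h2 h3 hc
      have := h _ ((word_ofFn φ U idx b).2 ⟨h1, h2, h3⟩) (by simp)
      rwa [pr_ofFn, rhs_ofFn_neg φ φ' _ _ hc] at this
    · intro m idx b h1 h2 h3 hc
      have := h _ ((word_ofFn φ U idx b).2 ⟨h1, h2, h3⟩) (by simp)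
      rwa [pr_ofFn, rhs_ofFn_pos φ φ' _ _ hc] at this

lemma pair_eq (φ : B →ₗ[ℂ] ℂ) (u : List (I × B)) : ∀ v : List (I × B), u.length = v.length →
    pair φ u v = ∏ j ∈ Finset.range u.length,
      φ ((u.map Prod.snd).getD j 0 * (v.map Prod.snd).getD j 0) := by
  induction u with
  | nil => intro v hv; simp [pair]
  | cons p u ih =>
    intro v hv
    rcases v with _ | ⟨q, v⟩
    · simp at hv
    · rw [List.length_cons, Finset.prod_range_succ', mul_comm]
      simp only [pair, ih v (by simpa using hv)]
      simp

end Fin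

/-- list form of cyclic antimonotone independence -/
def CAL (φ Φ : B →ₗ[ℂ] ℂ) (A₁ F₁ : Set B) : Prop :=
  ∀ (L : List (B × B)) (a₀ f a₁ : B), a₀ ∈ A₁ → f ∈ F₁ → a₁ ∈ A₁ →
    (∀ p ∈ L, p.1 ∈ F₁ ∧ p.2 ∈ A₁) →
    Φ (a₀ * (L.map fun p => p.1 * p.2).prod * f * a₁) =
      φ (a₀ * a₁) * (L.map fun p => φ p.2).prod * Φ ((L.map Prod.fst).prod * f)

lemma prod_Ioo {m : ℕ} (g : Fin (m + 2) → ℂ) :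
    ∏ k ∈ Finset.Ioo (0 : Fin (m + 2)) (Fin.last (m + 1)), g k
      = ∏ k : Fin m, g k.castSucc.succ := by
  symm
  refine Finset.prod_bij (fun k _ => k.castSucc.succ) ?_ ?_ ?_ ?_
  · intro k _
    simp [Fin.lt_def]
  · intro a _ b _ h
    simpa using h
  · intro k hk
    simp only [Finset.mem_Ioo, Fin.lt_def, Fin.val_last, Fin.val_zero] at hk
    refine ⟨⟨k.1 - 1, by omega⟩, Finset.mem_univ _, ?_⟩
    ext
    simp
    omega
  · intro k _
    rfl

lemma altWord_eq {m : ℕ} (a : Fin (m + 2) → B) (f : Fin (m + 1) → B) :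
    altWord a f = a 0 * ((List.ofFn fun k : Fin m => (f k.castSucc, a k.castSucc.succ)).map
      fun p => p.1 * p.2).prod * f (Fin.last m) * a (Fin.last (m + 1)) := by
  unfold altWord
  rw [List.ofFn_succ', List.map_ofFn]
  simp [mul_assoc, Function.comp_def]

lemma ca_iff (φ Φ : B →ₗ[ℂ] ℂ) (A₁ F₁ : Set B) :
    CyclicAntimonotone ⇑φ ⇑Φ A₁ F₁ ↔ CAL φ Φ A₁ F₁ := by
  constructor
  · intro h
    unfold CAL
    refine forall_list ?_
    intro m g a₀ f a₁ ha₀ hf ha₁ hL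
    rw [List.forall_mem_ofFn_iff] at hL
    have := h (m + 1) (by omega) (Fin.cons a₀ (Fin.snoc (fun k => (g k).2) a₁))
      (Fin.snoc (fun k => (g k).1) f) ?_ ?_
    · rw [altWord_eq, prod_Ioo, List.ofFn_succ'] at this
      simp only [Fin.cons_succ, Fin.snoc_castSucc, Fin.cons_zero, Fin.snoc_last,
        ← Fin.succ_last] at this
      simpa [List.map_ofFn, Function.comp_def, List.prod_ofFn] using this
    · intro k
      refine Fin.cases ?_ (fun k => ?_) k
      · simpa using ha₀
      · refine Fin.lastCases ?_ (fun k => ?_) k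
        · simpa using ha₁
        · simpa using (hL k).2
    · intro k
      refine Fin.lastCases ?_ (fun k => ?_) k
      · simpa using hf
      · simpa using (hL k).1
  · intro h n hn a f ha hf
    obtain ⟨m, rfl⟩ : ∃ m, n = m + 1 := ⟨n - 1, by omega⟩
    have := h (List.ofFn fun k : Fin m => (f k.castSucc, a k.castSucc.succ)) (a 0)
      (f (Fin.last m)) (a (Fin.last (m + 1))) (ha _) (hf _) (ha _)
      (by rw [List.forall_mem_ofFn_iff]; exact fun k => ⟨hf _, ha _⟩)
    rw [altWord_eq, this, prod_Ioo, List.ofFn_succ' f]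
    simp [List.map_ofFn, Function.comp_def, List.prod_ofFn]

lemma trivIndep_iff {κ : Type*} (Φ : B →ₗ[ℂ] ℂ) (S : κ → Set B) :
    TrivIndep ⇑Φ S ↔ ∀ l, Word S l → 2 ≤ l.length → Φ (pr l) = 0 := by
  have hw : ∀ {n : ℕ} (idx : Fin (n + 2) → κ) (f : Fin (n + 2) → B),
      Word S (List.ofFn fun k => (idx k, f k)) ↔
      (∀ k : Fin (n + 1), idx k.castSucc ≠ idx k.succ) ∧ (∀ k, f k ∈ S (idx k)) := by
    intro n idx f
    unfold Word
    rw [List.isChain_ofFn, List.forall_mem_ofFn_iff]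
    refine and_congr ?_ Iff.rfl
    constructor
    · intro h k
      exact h k.1 (by omega)
    · intro h i hi
      exact h ⟨i, by omega⟩
  constructor
  · intro h
    refine forall_list ?_
    intro n g hg hn
    rw [List.length_ofFn] at hn
    obtain ⟨m, rfl⟩ : ∃ m, n = m + 2 := ⟨n - 2, by omega⟩
    have hg' : g = fun k => ((g k).1, (g k).2) := rfl
    rw [hg', hw] at hg
    rw [hg', pr_ofFn]
    exact h m _ _ hg.1 hg.2
  · intro h n idx f h1 h2
    have := h _ ((hw idx f).2 ⟨h1, h2⟩) (by simp)
    rwa [pr_ofFn] at this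

section SumWords

variable {ι κ : Type*}

/-- letters of the first kind -/
def inlL (p : ι × B) : (ι ⊕ κ) × B := (Sum.inl p.1, p.2)

/-- letters of the second kind -/
def inrL (p : κ × B) : (ι ⊕ κ) × B := (Sum.inr p.1, p.2)

@[simp] lemma inlL_snd (p : ι × B) : (inlL p : (ι ⊕ κ) × B).2 = p.2 := rfl
@[simp] lemma inrL_snd (p : κ × B) : (inrL p : (ι ⊕ κ) × B).2 = p.2 := rfl
@[simp] lemma inlL_fst (p : ι × B) : (inlL p : (ι ⊕ κ) × B).1 = Sum.inl p.1 := rfl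
@[simp] lemma inrL_fst (p : κ × B) : (inrL p : (ι ⊕ κ) × B).1 = Sum.inr p.1 := rfl

lemma map_snd_inl (u : List (ι × B)) :
    (u.map (inlL (κ := κ))).map Prod.snd = u.map Prod.snd := by
  simp [Function.comp_def]

lemma map_fst_inl (u : List (ι × B)) :
    (u.map (inlL (κ := κ))).map Prod.fst = (u.map Prod.fst).map Sum.inl := by
  simp [Function.comp_def]

@[simp] lemma pr_inl (u : List (ι × B)) : pr (u.map (inlL (κ := κ))) = pr u := by
  simp [pr, Function.comp_def]

@[simp] lemma pr_inr (u : List (κ × B)) : pr (u.map (inrL (ι := ι))) = pr u := by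
  simp [pr, Function.comp_def]

lemma word_inl (S1 : ι → Set B) (S2 : κ → Set B) (u : List (ι × B)) :
    Word (Sum.elim S1 S2) (u.map inlL) ↔ Word S1 u := by
  unfold Word
  rw [List.isChain_map, List.forall_mem_map]
  simp

lemma word_inr (S1 : ι → Set B) (S2 : κ → Set B) (u : List (κ × B)) :
    Word (Sum.elim S1 S2) (u.map inrL) ↔ Word S2 u := by
  unfold Word
  rw [List.isChain_map, List.forall_mem_map]
  simp

lemma split_first (l : List ((ι ⊕ κ) × B)) :
    (∃ u : List (ι × B), l = u.map inlL) ∨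
    ∃ (u : List (ι × B)) (g : κ × B) (y : List ((ι ⊕ κ) × B)), l = u.map inlL ++ inrL g :: y := by
  induction l with
  | nil => exact Or.inl ⟨[], rfl⟩
  | cons p l ih =>
    obtain ⟨i | j, b⟩ := p
    · rcases ih with ⟨u, rfl⟩ | ⟨u, g, y, rfl⟩
      · exact Or.inl ⟨(i, b) :: u, rfl⟩
      · exact Or.inr ⟨(i, b) :: u, g, y, rfl⟩
    · exact Or.inr ⟨[], (j, b), l, rfl⟩

lemma tri (l : List ((ι ⊕ κ) × B)) :
    (∃ u : List (ι × B), l = u.map inlL) ∨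
    (∃ (u : List (ι × B)) (g : κ × B) (v : List (ι × B)),
      l = u.map inlL ++ inrL g :: v.map inlL) ∨
    ∃ (x : List ((ι ⊕ κ) × B)) (g : κ × B) (w : List ((ι ⊕ κ) × B)) (g' : κ × B)
      (y : List ((ι ⊕ κ) × B)), l = x ++ inrL g :: (w ++ inrL g' :: y) := by
  rcases split_first l with h | ⟨u, g, y, rfl⟩
  · exact Or.inl h
  · rcases split_first y with ⟨v, rfl⟩ | ⟨v, g', z, rfl⟩
    · exact Or.inr (Or.inl ⟨u, g, v, rfl⟩)
    · exact Or.inr (Or.inr ⟨_, g, _, g', z, rfl⟩)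

/-- a block: a letter of the second kind followed by letters of the first kind -/
def block (p : (κ × B) × List (ι × B)) : List ((ι ⊕ κ) × B) := inrL p.1 :: p.2.map inlL

lemma parse (l : List ((ι ⊕ κ) × B)) :
    (∃ u : List (ι × B), l = u.map inlL) ∨
    ∃ (u : List (ι × B)) (L : List ((κ × B) × List (ι × B))) (g : κ × B) (v : List (ι × B)),
      l = u.map inlL ++ (L.flatMap block ++ inrL g :: v.map inlL) := by
  induction l with
  | nil => exact Or.inl ⟨[], rfl⟩
  | cons p l ih =>
    obtain ⟨i | j, b⟩ := p
    · rcases ih with ⟨u, rfl⟩ | ⟨u, L, g, v, rfl⟩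
      · exact Or.inl ⟨(i, b) :: u, rfl⟩
      · exact Or.inr ⟨(i, b) :: u, L, g, v, rfl⟩
    · rcases ih with ⟨u, rfl⟩ | ⟨u, L, g, v, rfl⟩
      · exact Or.inr ⟨[], [], (j, b), u, rfl⟩
      · refine Or.inr ⟨[], ((j, b), u) :: L, g, v, ?_⟩
        simp [block, inrL]

lemma pr_flatMap (L : List ((κ × B) × List (ι × B))) :
    pr (L.flatMap (block (ι := ι))) = (L.map fun p => p.1.2 * pr p.2).prod := by
  induction L with
  | nil => rfl
  | cons p L ih => simp [block, ih, mul_assoc]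

lemma rhs_inl (φ φ' : B →ₗ[ℂ] ℂ) (u : List (ι × B)) (hu : ∀ p ∈ u, φ' p.2 = 0) :
    rhs φ φ' (u.map (inlL (κ := κ))) = 0 := by
  unfold rhs
  split_ifs
  · rw [map_snd_inl]
    have : ∀ k, φ' ((u.map Prod.snd).getD k 0) = 0 := by
      intro k
      by_cases hk : k < (u.map Prod.snd).length
      · rw [List.getD_eq_getElem _ _ hk, List.getElem_map]
        exact hu _ (List.getElem_mem _)
      · rw [List.getD_eq_default _ _ (not_lt.1 hk), map_zero]
    rw [this, mul_zero]
  · rfl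

lemma rhs_two (φ φ' : B →ₗ[ℂ] ℂ) (F : Submodule ℂ B)
    (hFmulL : ∀ b : B, ∀ f ∈ F, b * f ∈ F)
    (hFmulR : ∀ b : B, ∀ f ∈ F, f * b ∈ F) (hφF : ∀ f ∈ F, φ f = 0)
    (x : List ((ι ⊕ κ) × B)) (g : κ × B) (w : List ((ι ⊕ κ) × B)) (g' : κ × B)
      (y : List ((ι ⊕ κ) × B)) (hg : g.2 ∈ F) (hg' : g'.2 ∈ F) :
    rhs φ φ' (x ++ inrL g :: (w ++ inrL g' :: y)) = 0 := by
  unfold rhs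
  split_ifs with h
  · obtain ⟨⟨m, hm⟩, -⟩ := h
    set l := x ++ inrL g :: (w ++ inrL g' :: y) with hl
    have hlen : x.length + 1 + w.length + 1 + y.length = 2 * m + 1 := by
      rw [← hm, hl]; simp; omega
    have e1 : (l.map Prod.snd).getD x.length 0 = g.2 := by
      simp [hl]
    have e2 : (l.map Prod.snd).getD (x.length + 1 + w.length) 0 = g'.2 := by
      have : l = (x ++ inrL g :: w) ++ inrL g' :: y := by simp [hl]
      rw [this, List.map_append, List.getD_append_right _ _ _ _ (by simp; omega)]
      have : x.length + 1 + w.length - (List.map Prod.snd (x ++ inrL g :: w)).length = 0 := by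
        simp; omega
      rw [this]; simp
    have hz : ∃ j < m, φ ((l.map Prod.snd).getD j 0 *
        (l.map Prod.snd).getD (2 * m + 1 - 1 - j) 0) = 0 := by
      by_cases hk : x.length < m
      · refine ⟨x.length, hk, ?_⟩
        rw [e1]
        exact hφF _ (hFmulR _ _ hg)
      · refine ⟨2 * m - (x.length + 1 + w.length), by omega, ?_⟩
        have : 2 * m + 1 - 1 - (2 * m - (x.length + 1 + w.length)) = x.length + 1 + w.length := by
          omega
        rw [this, e2]
        exact hφF _ (hFmulL _ _ hg')
    obtain ⟨j, hj, hz⟩ := hz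
    rw [hm]
    have : (2 * m + 1) / 2 = m := by omega
    rw [this, Finset.prod_eq_zero (Finset.mem_range.2 hj) hz, zero_mul]
  · rfl

lemma inl_cancel (X : List ι) : ∀ (X' : List ι) (j j' : κ) (Y Y' : List (ι ⊕ κ)),
    X.map Sum.inl ++ Sum.inr j :: Y = X'.map Sum.inl ++ Sum.inr j' :: Y' → X = X' := by
  induction X with
  | nil =>
    intro X' j j' Y Y' h
    rcases X' with _ | ⟨a, X'⟩
    · rfl
    · simp at h
  | cons a X ih =>
    intro X' j j' Y Y' h
    rcases X' with _ | ⟨a', X'⟩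
    · simp at h
    · simp only [List.map_cons, List.cons_append, List.cons.injEq, Sum.inl.injEq] at h
      rw [h.1, ih X' j j' Y Y' h.2]

lemma rhs_one (φ φ' : B →ₗ[ℂ] ℂ) (hφ1 : φ 1 = 1) (S1 : ι → Set B)
    (hS : ∀ i, ∀ a ∈ S1 i, ∀ b ∈ S1 i, ∃ c : ℂ, ∃ g ∈ S1 i, a * b = algebraMap ℂ B c + g)
    (h0 : ∀ i, ∀ a ∈ S1 i, φ a = 0) (hfree : FreeL φ S1)
    (u v : List (ι × B)) (g : κ × B) (hu : Word S1 u) (hv : Word S1 v) :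
    rhs φ φ' (u.map inlL ++ inrL g :: v.map inlL) = φ (pr u * pr v) * φ' g.2 := by
  obtain ⟨u, rfl⟩ : ∃ u', u = List.reverse u' := ⟨u.reverse, by simp⟩
  obtain ⟨f1, f2⟩ := free_pair φ hφ1 S1 hS h0 hfree u v hu hv
  by_cases h : u.map Prod.fst = v.map Prod.fst
  · rw [f1 h]
    have hlen : u.length = v.length := by simpa using congrArg List.length h
    have hN : (u.reverse.map inlL ++ inrL g :: v.map inlL : List ((ι ⊕ κ) × B)).length
        = 2 * u.length + 1 := by
      simp; omega
    unfold rhs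
    rw [hN, if_pos]
    · have hm : (2 * u.length + 1) / 2 = u.length := by omega
      rw [hm, List.map_append, List.map_cons, map_snd_inl, map_snd_inl, pair_eq φ u v hlen]
      congr 1
      · symm
        rw [← Finset.prod_range_reflect]
        refine Finset.prod_congr rfl fun j hj => ?_
        symm
        have hj := Finset.mem_range.1 hj
        rw [List.getD_append _ _ _ _ (by simpa using hj),
          List.getD_append_right _ _ _ _ (by simp; omega)]
        have e : 2 * u.length + 1 - 1 - j - (u.reverse.map Prod.snd).length
          = (u.length - 1 - j) + 1 := by simp; omega
        rw [e, List.getD_cons_succ, List.map_reverse,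
          List.getD_eq_getElem _ _ (by simpa using hj), List.getElem_reverse,
          List.getD_eq_getElem (u.map Prod.snd) _ (by simp; omega)]
        simp
      · rw [List.getD_append_right _ _ _ _ (by simp)]
        simp
    · refine ⟨⟨u.length, rfl⟩, ?_⟩
      simp only [List.map_append, List.map_cons, map_fst_inl, List.map_reverse, h]
      simp
  · rw [f2 h, zero_mul]
    unfold rhs
    rw [if_neg]
    rintro ⟨-, h2⟩
    apply h
    simp only [List.map_append, List.map_cons, map_fst_inl, List.reverse_append,
      List.reverse_cons, List.append_assoc, ← List.map_reverse, List.reverse_reverse,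
      List.singleton_append] at h2
    have := inl_cancel _ _ _ _ _ _ h2
    simpa using this.symm

end SumWords

section Main

variable {ι κ : Type*}

/-- words with two letters of the second kind are killed -/
def I1 (Φ : B →ₗ[ℂ] ℂ) (S : ι ⊕ κ → Set B) : Prop :=
  ∀ (x : List ((ι ⊕ κ) × B)) (g : κ × B) (w : List ((ι ⊕ κ) × B)) (g' : κ × B)
    (y : List ((ι ⊕ κ) × B)), Word S (x ++ inrL g :: (w ++ inrL g' :: y)) →
    Φ (pr (x ++ inrL g :: (w ++ inrL g' :: y))) = 0

/-- words with exactly one letter of the second kind -/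
def I2 (φ Φ : B →ₗ[ℂ] ℂ) (S1 : ι → Set B) (S2 : κ → Set B) : Prop :=
  ∀ (u v : List (ι × B)) (j : κ) (f : B), Word S1 u → Word S1 v → f ∈ S2 j →
    Φ (pr u * f * pr v) = φ (pr u * pr v) * Φ f

lemma pr_mem_F (F : Submodule ℂ B)
    (hFmulL : ∀ b : B, ∀ f ∈ F, b * f ∈ F)
    (hFmulR : ∀ b : B, ∀ f ∈ F, f * b ∈ F)
    (x : List ((ι ⊕ κ) × B)) (g : κ × B) (y : List ((ι ⊕ κ) × B)) (hg : g.2 ∈ F) :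
    pr (x ++ inrL g :: y) ∈ F := by
  rw [pr_append, pr_cons]
  exact hFmulL _ _ (hFmulR _ _ hg)

lemma inf_iff_M (F : Submodule ℂ B)
    (hFmulL : ∀ b : B, ∀ f ∈ F, b * f ∈ F)
    (hFmulR : ∀ b : B, ∀ f ∈ F, f * b ∈ F)
    (φ Φ φ' : B →ₗ[ℂ] ℂ)
    (hφ1 : φ 1 = 1) (hφF : ∀ f ∈ F, φ f = 0) (hφ'F : ∀ f ∈ F, φ' f = Φ f)
    (S1 : ι → Set B) (S2 : κ → Set B)
    (hS : ∀ i, ∀ a ∈ S1 i, ∀ b ∈ S1 i, ∃ c : ℂ, ∃ g ∈ S1 i, a * b = algebraMap ℂ B c + g)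
    (h0 : ∀ i, ∀ a ∈ S1 i, φ a = 0)
    (hA : ∀ u, Word S1 u → φ' (pr u) = 0) (h2F : ∀ j, ∀ f ∈ S2 j, f ∈ F) :
    (FreeL φ (Sum.elim S1 S2) ∧
      ∀ l, Word (Sum.elim S1 S2) l → l ≠ [] → φ' (pr l) = rhs φ φ' l) ↔
    (FreeL φ S1 ∧ I1 Φ (Sum.elim S1 S2) ∧ I2 φ Φ S1 S2) := by
  have hw1 : ∀ (u v : List (ι × B)) (g : κ × B),
      Word (Sum.elim S1 S2) (u.map inlL ++ inrL g :: v.map inlL) →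
      Word S1 u ∧ Word S1 v ∧ g.2 ∈ S2 g.1 := by
    intro u v g h
    refine ⟨(word_inl S1 S2 u).1 (h.of_subword (List.prefix_append _ _).isInfix),
      (word_inl S1 S2 v).1 (h.of_subword ?_), h.2 (inrL g) (by simp)⟩
    exact ((List.suffix_cons _ _).trans (List.suffix_append _ _)).isInfix
  have hw2 : ∀ (u v : List (ι × B)) (g : κ × B),
      Word S1 u → Word S1 v → g.2 ∈ S2 g.1 →
      Word (Sum.elim S1 S2) (u.map inlL ++ inrL g :: v.map inlL) := by
    intro u v g hu hv hg
    have hu' := (word_inl S1 S2 u).2 hu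
    have hv' := (word_inl S1 S2 v).2 hv
    refine ⟨?_, ?_⟩
    · rw [List.isChain_append, List.isChain_cons]
      refine ⟨hu'.1, ⟨?_, hv'.1⟩, ?_⟩
      · intro y hy
        have := List.mem_of_mem_head? hy
        obtain ⟨q, -, rfl⟩ := List.mem_map.1 this
        simp
      · intro x hx y hy
        have := List.mem_of_mem_getLast? hx
        obtain ⟨q, -, rfl⟩ := List.mem_map.1 this
        simp only [List.head?_cons, Option.mem_def, Option.some.injEq] at hy
        subst hy
        simp
    · intro p hp
      rcases List.mem_append.1 hp with hp | hp
      · exact hu'.2 p hp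
      · rcases List.mem_cons.1 hp with rfl | hp
        · exact hg
        · exact hv'.2 p hp
  constructor
  · rintro ⟨hf, h⟩
    have hfree : FreeL φ S1 := by
      intro l hl hne
      have := hf (l.map inlL) ((word_inl S1 S2 l).2 hl) (by simpa using hne)
      simpa using this
    refine ⟨hfree, ?_, ?_⟩
    · intro x g w g' y hw
      have hg : g.2 ∈ F := h2F g.1 _ (hw.2 (inrL g) (by simp))
      have hg' : g'.2 ∈ F := h2F g'.1 _ (hw.2 (inrL g') (by simp))
      rw [← hφ'F _ (pr_mem_F F hFmulL hFmulR _ _ _ hg), h _ hw (by simp)]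
      exact rhs_two φ φ' F hFmulL hFmulR hφF x g w g' y hg hg'
    · intro u v j f hu hv hf
      have := h _ (hw2 u v (j, f) hu hv hf) (by simp)
      rw [rhs_one φ φ' hφ1 S1 hS h0 hfree u v (j, f) hu hv] at this
      rw [hφ'F _ (pr_mem_F F hFmulL hFmulR _ _ _ (h2F j f hf))] at this
      rw [← hφ'F f (h2F j f hf), ← this]
      simp [mul_assoc]
  · rintro ⟨hfree, h1, h2⟩
    refine ⟨?_, ?_⟩
    · intro l hl hne
      rcases split_first l with ⟨u, rfl⟩ | ⟨u, g, y, rfl⟩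
      · rw [pr_inl]
        exact hfree u ((word_inl S1 S2 u).1 hl) (by simpa using hne)
      · exact hφF _ (pr_mem_F F hFmulL hFmulR _ _ _ (h2F g.1 _ (hl.2 (inrL g) (by simp))))
    · intro l hl hne
      rcases tri l with ⟨u, rfl⟩ | ⟨u, g, v, rfl⟩ | ⟨x, g, w, g', y, rfl⟩
      · have hu := (word_inl S1 S2 u).1 hl
        rw [pr_inl, hA u hu, rhs_inl]
        intro p hp
        have := hA [(p.1, p.2)] (Word.single (hu.2 p hp))
        simpa using this
      · obtain ⟨hu, hv, hg⟩ := hw1 u v g hl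
        rw [rhs_one φ φ' hφ1 S1 hS h0 hfree u v g hu hv,
          hφ'F _ (pr_mem_F F hFmulL hFmulR _ _ _ (h2F _ _ hg)), hφ'F _ (h2F _ _ hg),
          ← h2 u v g.1 g.2 hu hv hg]
        simp [mul_assoc]
      · have hg : g.2 ∈ F := h2F g.1 _ (hl.2 (inrL g) (by simp))
        have hg' : g'.2 ∈ F := h2F g'.1 _ (hl.2 (inrL g') (by simp))
        rw [rhs_two φ φ' F hFmulL hFmulR hφF x g w g' y hg hg',
          hφ'F _ (pr_mem_F F hFmulL hFmulR _ _ _ hg)]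
        exact h1 x g w g' y hl

lemma M_of_CAL (φ Φ : B →ₗ[ℂ] ℂ) (S1 : ι → Set B) (S2 : κ → Set B)
    (𝒜 : Subalgebra ℂ B) (ℱ : Set B) (hA : ∀ i, ∀ a ∈ S1 i, a ∈ 𝒜)
    (hF : ∀ j, ∀ f ∈ S2 j, f ∈ ℱ) (hfree : FreeL φ S1) (hca : CAL φ Φ 𝒜 ℱ)
    (htriv : ∀ l, Word S2 l → 2 ≤ l.length → Φ (pr l) = 0) :
    I1 Φ (Sum.elim S1 S2) ∧ I2 φ Φ S1 S2 := by
  have hpr : ∀ u, Word S1 u → pr u ∈ 𝒜 := by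
    intro u hu
    refine list_prod_mem ?_
    intro b hb
    obtain ⟨p, hp, rfl⟩ := List.mem_map.1 hb
    exact hA p.1 _ (hu.2 p hp)
  refine ⟨?_, ?_⟩
  · intro x g w g' y hl
    rcases parse (x ++ inrL g :: (w ++ inrL g' :: y)) with ⟨u, hu⟩ | ⟨u, L, k, v, hu⟩
    · exfalso
      have : inrL g ∈ u.map (inlL (κ := κ)) := by rw [← hu]; simp
      obtain ⟨q, -, hq⟩ := List.mem_map.1 this
      have := congrArg Prod.fst hq
      simp at this
    · have hLne : L ≠ [] := by
        rintro rfl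
        have h := congrArg (fun l : List ((ι ⊕ κ) × B) =>
          (l.countP (fun p => p.1.isRight))) hu
        have hc : ∀ u : List (ι × B),
            (u.map (inlL (κ := κ))).countP (fun p => p.1.isRight) = 0 := by
          intro u
          rw [List.countP_eq_zero]
          intro p hp
          obtain ⟨q, -, rfl⟩ := List.mem_map.1 hp
          simp
        simp only [List.countP_append, List.flatMap_nil, List.nil_append, List.countP_cons, hc,
          inrL_fst, Sum.isRight_inr, if_true] at h
        omega
      rw [hu] at hl ⊢
      have hLw : ∀ p ∈ L, Word (Sum.elim S1 S2) (block p) := by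
        intro p hp
        refine hl.of_subword ?_
        have h1 : block p <:+: L.flatMap block :=
          List.infix_of_mem_flatten (List.mem_map_of_mem hp)
        exact h1.trans ((List.prefix_append _ _).isInfix.trans (List.suffix_append _ _).isInfix)
      have hwu : Word S1 u :=
        (word_inl S1 S2 u).1 (hl.of_subword (List.prefix_append _ _).isInfix)
      have hwv : Word S1 v := by
        refine (word_inl S1 S2 v).1 (hl.of_subword ?_)
        exact ((List.suffix_cons _ _).trans
          ((List.suffix_append _ _).trans (List.suffix_append _ _))).isInfix
      have hLS : ∀ p ∈ L, p.1.2 ∈ S2 p.1.1 ∧ Word S1 p.2 := by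
        intro p hp
        have := hLw p hp
        exact ⟨this.2 (inrL p.1) (by simp [block]), (word_inl S1 S2 _).1 this.tail⟩
      have hk : k.2 ∈ S2 k.1 := hl.2 (inrL k) (by simp)
      have e := hca (L.map fun p => (p.1.2, pr p.2)) (pr u) k.2 (pr v) (hpr u hwu)
        (hF _ _ hk) (hpr v hwv) (by
          intro q hq
          obtain ⟨p, hp, rfl⟩ := List.mem_map.1 hq
          exact ⟨hF _ _ (hLS p hp).1, hpr _ (hLS p hp).2⟩)
      simp only [List.map_map, Function.comp_def] at e
      have e2 : pr (u.map inlL ++ (L.flatMap block ++ inrL k :: v.map inlL))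
          = pr u * (L.map fun p => p.1.2 * pr p.2).prod * k.2 * pr v := by
        simp [pr_flatMap, mul_assoc]
      rw [e2, e]
      by_cases hall : ∀ p ∈ L, p.2 = []
      · have hL : L.flatMap (block (ι := ι)) = (L.map Prod.fst).map inrL := by
          clear * - hall
          induction L with
          | nil => rfl
          | cons p L ih =>
            rw [List.flatMap_cons, ih (fun p hp => hall p (List.mem_cons_of_mem _ hp))]
            simp [block, hall p (by simp)]
        have hw : Word S2 (L.map Prod.fst ++ [k]) := by
          refine (word_inr S1 S2 _).1 (hl.of_subword ?_)
          rw [hL]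
          refine ⟨u.map inlL, v.map inlL, ?_⟩
          simp
        have := htriv _ hw (by
          have := List.length_pos_iff.2 hLne
          simp; omega)
        rw [pr_append] at this
        simp only [pr, List.map_map, Function.comp_def] at this
        simp only [List.map_cons, List.map_nil, List.prod_cons, List.prod_nil, mul_one] at this
        rw [this, mul_zero]
      · push Not at hall
        obtain ⟨p, hp, hne⟩ := hall
        have : (L.map fun p => φ (pr p.2)).prod = 0 := by
          rw [List.prod_eq_zero_iff]
          exact List.mem_map.2 ⟨p, hp, hfree _ (hLS p hp).2 hne⟩
        rw [this]; simp
  · intro u v j f hu hv hf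
    have := hca [] (pr u) f (pr v) (hpr u hu) (hF j f hf) (hpr v hv) (by simp)
    simpa using this

end Main

section Main2

variable {ι κ : Type*}

lemma CAL_of_M (φ Φ : B →ₗ[ℂ] ℂ) (hφ1 : φ 1 = 1) (S1 : ι → Set B) (S2 : κ → Set B)
    (hS : ∀ i, ∀ a ∈ S1 i, ∀ b ∈ S1 i, ∃ c : ℂ, ∃ g ∈ S1 i, a * b = algebraMap ℂ B c + g)
    (hS2 : ∀ j, ∀ a ∈ S2 j, ∀ b ∈ S2 j, a * b ∈ S2 j)
    (hfree : FreeL φ S1) (h1 : I1 Φ (Sum.elim S1 S2)) (h2 : I2 φ Φ S1 S2) :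
    CAL φ Φ (Algebra.adjoin ℂ (⋃ i, S1 i) : Set B)
      (NonUnitalAlgebra.adjoin ℂ (⋃ j, S2 j) : Set B) := by
  set 𝒜 := Algebra.adjoin ℂ (⋃ i, S1 i) with h𝒜
  set ℱ := NonUnitalAlgebra.adjoin ℂ (⋃ j, S2 j) with hℱ
  set S := Sum.elim S1 S2 with hSdef
  set C := Algebra.adjoin ℂ (⋃ i, S i) with hC
  have hSS : ∀ i, ∀ a ∈ S i, ∀ b ∈ S i, ∃ c : ℂ, ∃ g ∈ S i, a * b = algebraMap ℂ B c + g := by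
    rintro (i | j) a ha b hb
    · exact hS i a ha b hb
    · exact ⟨0, a * b, hS2 j a ha b hb, by simp⟩
  have hSC : ∀ i, ∀ a ∈ S i, a ∈ C := fun i a ha =>
    Algebra.subset_adjoin (Set.mem_iUnion.2 ⟨i, ha⟩)
  have h𝒜C : ∀ a ∈ 𝒜, a ∈ C := by
    intro a ha
    refine Algebra.adjoin_mono ?_ ha
    exact Set.iUnion_subset fun i x hx => Set.mem_iUnion.2 ⟨Sum.inl i, hx⟩
  have hℱC : ∀ f ∈ ℱ, f ∈ C := by
    intro f hf
    refine NonUnitalAlgebra.adjoin_induction (p := fun x _ => x ∈ C) ?_ ?_ ?_ ?_ ?_ hf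
    · intro x hx
      obtain ⟨j, hj⟩ := Set.mem_iUnion.1 hx
      exact hSC (Sum.inr j) x hj
    · exact fun a b _ _ ha hb => C.add_mem ha hb
    · exact C.zero_mem
    · exact fun a b _ _ ha hb => C.mul_mem ha hb
    · exact fun r a _ ha => C.smul_mem ha r
  -- right ends
  set X := Submodule.span ℂ {b | ∃ (z : List ((ι ⊕ κ) × B)) (g : κ × B),
    Word S (z ++ [inrL g]) ∧ b = pr (z ++ [inrL g])} with hX
  set Y := Submodule.span ℂ {b | ∃ (z : List ((ι ⊕ κ) × B)) (g : κ × B),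
    Word S (inrL g :: z) ∧ b = pr (inrL g :: z)} with hY
  have hX0 : ∀ x ∈ C, ∀ j, ∀ f ∈ S2 j, x * f ∈ X := by
    intro x hx j f hf
    refine Submodule.span_induction (p := fun x _ => x * f ∈ X) ?_ ?_ ?_ ?_
      (adjoin_le_span hSS hx)
    · rintro _ ⟨l, hl, rfl⟩
      obtain ⟨g, z, hz, e⟩ := merge_right (S := S) (i := Sum.inr j) (hS2 j) hl hf
      exact Submodule.subset_span ⟨z, (j, g), hz, e⟩
    · simp
    · intro a b _ _ ha hb
      rw [add_mul]; exact X.add_mem ha hb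
    · intro r a _ ha
      rw [smul_mul_assoc]; exact X.smul_mem _ ha
  have hY0 : ∀ y ∈ C, ∀ j, ∀ f ∈ S2 j, f * y ∈ Y := by
    intro y hy j f hf
    refine Submodule.span_induction (p := fun y _ => f * y ∈ Y) ?_ ?_ ?_ ?_
      (adjoin_le_span hSS hy)
    · rintro _ ⟨l, hl, rfl⟩
      obtain ⟨g, z, hz, e⟩ := merge_left (S := S) (i := Sum.inr j) (hS2 j) hl hf
      exact Submodule.subset_span ⟨z, (j, g), hz, e⟩
    · simp
    · intro a b _ _ ha hb
      rw [mul_add]; exact Y.add_mem ha hb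
    · intro r a _ ha
      rw [mul_smul_comm]; exact Y.smul_mem _ ha
  have hX1 : ∀ f ∈ ℱ, ∀ x ∈ C, x * f ∈ X := by
    intro f hf
    refine NonUnitalAlgebra.adjoin_induction (p := fun f _ => ∀ x ∈ C, x * f ∈ X)
      ?_ ?_ ?_ ?_ ?_ hf
    · intro f hf x hx
      obtain ⟨j, hj⟩ := Set.mem_iUnion.1 hf
      exact hX0 x hx j f hj
    · intro a b _ _ ha hb x hx
      rw [mul_add]; exact X.add_mem (ha x hx) (hb x hx)
    · simp
    · intro a b ha' _ ha hb x hx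
      rw [← mul_assoc]
      exact hb _ (C.mul_mem hx (hℱC a ha'))
    · intro r a _ ha x hx
      rw [mul_smul_comm]; exact X.smul_mem _ (ha x hx)
  have hY1 : ∀ f ∈ ℱ, ∀ y ∈ C, f * y ∈ Y := by
    intro f hf
    refine NonUnitalAlgebra.adjoin_induction (p := fun f _ => ∀ y ∈ C, f * y ∈ Y)
      ?_ ?_ ?_ ?_ ?_ hf
    · intro f hf x hx
      obtain ⟨j, hj⟩ := Set.mem_iUnion.1 hf
      exact hY0 x hx j f hj
    · intro a b _ _ ha hb x hx
      rw [add_mul]; exact Y.add_mem (ha x hx) (hb x hx)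
    · simp
    · intro a b _ hb' ha hb x hx
      rw [mul_assoc]
      exact ha _ (C.mul_mem (hℱC b hb') hx)
    · intro r a _ ha x hx
      rw [smul_mul_assoc]; exact Y.smul_mem _ (ha x hx)
  -- the basic reduction
  have key : ∀ a ∈ 𝒜, ∀ p ∈ X, ∀ q ∈ Y, Φ (p * a * q) = φ a * Φ (p * q) := by
    intro a ha p hp q hq
    refine Submodule.span_induction (p := fun a _ => Φ (p * a * q) = φ a * Φ (p * q))
      ?_ ?_ ?_ ?_ (adjoin_le_span hS ha)
    · rintro _ ⟨w, hw, rfl⟩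
      rcases eq_or_ne w [] with rfl | hne
      · simp [hφ1]
      rw [hfree w hw hne, zero_mul]
      refine Submodule.span_induction (p := fun p _ => Φ (p * pr w * q) = 0) ?_ ?_ ?_ ?_ hp
      · rintro _ ⟨z, g, hz, rfl⟩
        refine Submodule.span_induction
          (p := fun q _ => Φ (pr (z ++ [inrL g]) * pr w * q) = 0) ?_ ?_ ?_ ?_ hq
        · rintro _ ⟨z', g', hz', rfl⟩
          have hw' := (word_inl S1 S2 w).2 hw
          have hword : Word S (z ++ inrL g :: (w.map inlL ++ inrL g' :: z')) := by
            have e1 : Word S (w.map inlL ++ inrL g' :: z') := by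
              rcases List.eq_nil_or_concat w with rfl | ⟨w0, p0, rfl⟩
              · exact absurd rfl hne
              · simp only [List.concat_eq_append, List.map_append, List.map_cons,
                  List.map_nil] at hw' ⊢
                exact Word.glue hw' hz' (by simp)
            rcases w with _ | ⟨p0, w0⟩
            · exact absurd rfl hne
            · have := Word.glue (q := inlL p0) hz e1 (by simp)
              simpa using this
          have := h1 z g (w.map inlL) g' z' hword
          rw [← this]
          simp [mul_assoc]
        · simp
        · intro a b _ _ ha hb
          rw [mul_add, map_add, ha, hb, add_zero]
        · intro r a _ ha
          rw [mul_smul_comm, map_smul, ha, smul_zero]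
      · simp
      · intro a b _ _ ha hb
        rw [add_mul, add_mul, map_add, ha, hb, add_zero]
      · intro r a _ ha
        rw [smul_mul_assoc, smul_mul_assoc, map_smul, ha, smul_zero]
    · simp
    · intro a b _ _ ha hb
      rw [mul_add, add_mul, map_add, ha, hb, map_add, add_mul]
    · intro r a _ ha
      rw [mul_smul_comm, smul_mul_assoc, map_smul, ha, map_smul, smul_eq_mul, smul_eq_mul,
        mul_assoc]
  have hlist : ∀ L : List (B × B), (∀ p ∈ L, p.1 ∈ ℱ ∧ p.2 ∈ 𝒜) → ∀ f ∈ ℱ,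
      (L.map Prod.fst).prod * f ∈ ℱ := by
    intro L
    induction L with
    | nil => intro _ f hf; simpa using hf
    | cons p L ih =>
      intro hL f hf
      rw [List.map_cons, List.prod_cons, mul_assoc]
      exact ℱ.mul_mem (hL p (by simp)).1
        (ih (fun p hp => hL p (List.mem_cons_of_mem _ hp)) f hf)
  have red : ∀ L : List (B × B), (∀ p ∈ L, p.1 ∈ ℱ ∧ p.2 ∈ 𝒜) → ∀ x ∈ C, ∀ f ∈ ℱ, ∀ y ∈ C,
      Φ (x * (L.map fun p => p.1 * p.2).prod * f * y) =
        (L.map fun p => φ p.2).prod * Φ (x * ((L.map Prod.fst).prod * f) * y) := by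
    intro L
    induction L with
    | nil => intro _ x hx f hf y hy; simp
    | cons p L ih =>
      intro hL x hx f hf y hy
      obtain ⟨hp1, hp2⟩ := hL p (by simp)
      have hL' : ∀ p ∈ L, p.1 ∈ ℱ ∧ p.2 ∈ 𝒜 := fun p hp => hL p (List.mem_cons_of_mem _ hp)
      have e1 := ih hL' (x * p.1 * p.2)
        (C.mul_mem (C.mul_mem hx (hℱC _ hp1)) (h𝒜C _ hp2)) f hf y hy
      have e2 := key p.2 hp2 (x * p.1) (hX1 _ hp1 x hx) ((L.map Prod.fst).prod * f * y)
        (hY1 _ (hlist L hL' f hf) y hy)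
      simp only [List.map_cons, List.prod_cons]
      simp only [mul_assoc] at e1 e2 ⊢
      rw [e1, e2]
      ring
  have fin : ∀ f ∈ ℱ, ∀ a ∈ 𝒜, ∀ a' ∈ 𝒜, Φ (a * f * a') = φ (a * a') * Φ f := by
    intro f hf a ha a' ha'
    refine Submodule.span_induction (p := fun a _ => Φ (a * f * a') = φ (a * a') * Φ f)
      ?_ ?_ ?_ ?_ (adjoin_le_span hS ha)
    · rintro _ ⟨u, hu, rfl⟩
      refine Submodule.span_induction (p := fun a' _ => Φ (pr u * f * a') = φ (pr u * a') * Φ f)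
        ?_ ?_ ?_ ?_ (adjoin_le_span hS ha')
      · rintro _ ⟨v, hv, rfl⟩
        refine Submodule.span_induction (p := fun f _ => Φ (pr u * f * pr v)
          = φ (pr u * pr v) * Φ f) ?_ ?_ ?_ ?_ (nonunital_adjoin_le_span hS2 hf)
        · rintro _ ⟨w, hw, hne, rfl⟩
          rcases w with _ | ⟨g, w⟩
          · exact absurd rfl hne
          rcases List.eq_nil_or_concat w with rfl | ⟨w, g', rfl⟩
          · simpa using h2 u v g.1 g.2 hu hv (hw.2 g (by simp))
          · rw [List.concat_eq_append] at hw ⊢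
            have hw' := (word_inr S1 S2 _).2 hw
            rw [List.map_cons, List.map_append, List.map_cons, List.map_nil] at hw'
            have hz := h1 [] g (w.map inrL) g' [] hw'
            have hz' : Φ (pr (g :: (w ++ [g']))) = 0 := by
              rw [← hz]; simp
            rw [hz', mul_zero]
            have hu' := (word_inl S1 S2 u).2 hu
            have hv' := (word_inl S1 S2 v).2 hv
            have e1 : Word S (u.map inlL ++ (inrL g :: (w.map inrL ++ [inrL g']))) := by
              rcases List.eq_nil_or_concat u with rfl | ⟨u0, p0, rfl⟩
              · exact hw'
              · simp only [List.concat_eq_append, List.map_append, List.map_cons,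
                  List.map_nil] at hu' ⊢
                exact Word.glue hu' hw' (by simp)
            have e2 : Word S (u.map inlL ++ inrL g :: (w.map inrL ++ inrL g' :: v.map inlL)) := by
              rcases v with _ | ⟨p0, v0⟩
              · exact e1
              · have := Word.glue (x := u.map inlL ++ inrL g :: w.map inrL) (p := inrL g')
                  (by simpa using e1) hv' (by simp)
                simpa using this
            rw [← h1 _ _ _ _ _ e2]
            simp [mul_assoc]
        · simp
        · intro a b _ _ ha hb
          rw [mul_add, add_mul, map_add, ha, hb, map_add, mul_add]
        · intro r a _ ha
          rw [mul_smul_comm, smul_mul_assoc, map_smul, ha, map_smul, smul_eq_mul, smul_eq_mul]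
          ring
      · simp
      · intro a b _ _ ha hb
        rw [mul_add, map_add, ha, hb, mul_add, map_add, add_mul]
      · intro r a _ ha
        rw [mul_smul_comm, map_smul, ha, mul_smul_comm, map_smul, smul_eq_mul, smul_eq_mul,
          mul_assoc]
    · simp
    · intro a b _ _ ha hb
      rw [add_mul, add_mul, map_add, ha, hb, add_mul, map_add, add_mul]
    · intro r a _ ha
      rw [smul_mul_assoc, smul_mul_assoc, map_smul, ha, smul_mul_assoc, map_smul, smul_eq_mul,
        smul_eq_mul, mul_assoc]
  intro L a₀ f a₁ ha₀ hf ha₁ hL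
  rw [red L hL a₀ (h𝒜C _ ha₀) f hf a₁ (h𝒜C _ ha₁), fin _ (hlist L hL f hf) a₀ ha₀ a₁ ha₁]
  ring

end Main2

theorem statement3
    {B : Type*} [Ring B] [Algebra ℂ B]
    (A : Subalgebra ℂ B) (F : Submodule ℂ B)
    (hFmulL : ∀ b : B, ∀ f ∈ F, b * f ∈ F)
    (hFmulR : ∀ b : B, ∀ f ∈ F, f * b ∈ F)
    (hAF : ∀ x ∈ A, x ∈ F → x = 0)
    (hdec : ∀ x : B, ∃ a ∈ A, ∃ f ∈ F, x = a + f)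
    (φ Φ φ' : B →ₗ[ℂ] ℂ)
    (hφ1 : φ 1 = 1) (hφF : ∀ f ∈ F, φ f = 0)
    (hφ'A : ∀ a ∈ A, φ' a = 0) (hφ'F : ∀ f ∈ F, φ' f = Φ f)
    {ι κ : Type*}
    (Ai : ι → Subalgebra ℂ B) (hAi : ∀ i, Ai i ≤ A)
    (Fj : κ → NonUnitalSubalgebra ℂ B) (hFj : ∀ j, ∀ f ∈ Fj j, f ∈ F) :
    (IsFreeFamily ⇑φ (fun i => (Ai i : Set B)) ∧
      CyclicAntimonotone ⇑φ ⇑Φ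
        (Algebra.adjoin ℂ (⋃ i, (Ai i : Set B)) : Set B)
        (NonUnitalAlgebra.adjoin ℂ (⋃ j, (Fj j : Set B)) : Set B) ∧
      TrivIndep ⇑Φ (fun j => (Fj j : Set B))) ↔
    IsInfFree ⇑φ ⇑φ'
      (Sum.elim (fun i => (Ai i : Set B))
        (fun j => unitize (Fj j : Set B))) := by
  have hcen : cen φ (Sum.elim (fun i => (Ai i : Set B)) (fun j => unitize (Fj j : Set B)))
      = Sum.elim (cen φ fun i => (Ai i : Set B)) (fun j => (Fj j : Set B)) := by
    funext k
    rcases k with i | j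
    · rfl
    · ext x
      constructor
      · rintro ⟨⟨c, f, hf, rfl⟩, hx⟩
        rw [map_add, hφF f (hFj j f hf), Algebra.algebraMap_eq_smul_one, map_smul, hφ1] at hx
        have hc : c = 0 := by simpa using hx
        subst hc
        simpa using hf
      · intro hx
        exact ⟨⟨0, x, hx, by simp⟩, hφF x (hFj j x hx)⟩
  have hcent : ∀ i, ∀ a ∈ Ai i, a - algebraMap ℂ B (φ a) ∈ cen φ (fun i => (Ai i : Set B)) i := by
    intro i a ha
    refine ⟨(Ai i).sub_mem ha ((Ai i).algebraMap_mem _), ?_⟩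
    rw [map_sub, Algebra.algebraMap_eq_smul_one, map_smul, hφ1]
    simp
  have hS : ∀ i, ∀ a ∈ cen φ (fun i => (Ai i : Set B)) i,
      ∀ b ∈ cen φ (fun i => (Ai i : Set B)) i, ∃ c : ℂ,
      ∃ g ∈ cen φ (fun i => (Ai i : Set B)) i, a * b = algebraMap ℂ B c + g := by
    intro i a ha b hb
    exact ⟨φ (a * b), _, hcent i _ ((Ai i).mul_mem ha.1 hb.1), by simp⟩
  have hadj : Algebra.adjoin ℂ (⋃ i, (Ai i : Set B))
      = Algebra.adjoin ℂ (⋃ i, cen φ (fun i => (Ai i : Set B)) i) := by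
    apply le_antisymm
    · refine Algebra.adjoin_le ?_
      refine Set.iUnion_subset fun i x hx => ?_
      have h1 : x - algebraMap ℂ B (φ x)
          ∈ Algebra.adjoin ℂ (⋃ i, cen φ (fun i => (Ai i : Set B)) i) :=
        Algebra.subset_adjoin (Set.mem_iUnion.2 ⟨i, hcent i x hx⟩)
      have h2 := Subalgebra.add_mem _ h1 (Subalgebra.algebraMap_mem _ (φ x))
      simpa using h2
    · refine Algebra.adjoin_mono ?_
      exact Set.iUnion_mono fun i x hx => hx.1
  have hA : ∀ u, Word (cen φ fun i => (Ai i : Set B)) u → φ' (pr u) = 0 := by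
    intro u hu
    refine hφ'A _ (list_prod_mem ?_)
    intro b hb
    obtain ⟨p, hp, rfl⟩ := List.mem_map.1 hb
    exact hAi p.1 (hu.2 p hp).1
  rw [isInfFree_iff, hcen, inf_iff_M F hFmulL hFmulR φ Φ φ' hφ1 hφF hφ'F _ _ hS
    (fun i a ha => ha.2) hA hFj, isFreeFamily_iff, ca_iff, trivIndep_iff]
  refine and_congr_right fun hfree => ?_
  constructor
  · rintro ⟨hca, htriv⟩
    refine M_of_CAL φ Φ _ _ _ _ ?_ ?_ hfree hca htriv
    · intro i a ha
      exact Algebra.subset_adjoin (Set.mem_iUnion.2 ⟨i, ha.1⟩)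
    · intro j f hf
      exact NonUnitalAlgebra.subset_adjoin ℂ (Set.mem_iUnion.2 ⟨j, hf⟩)
  · rintro ⟨h1, h2⟩
    refine ⟨?_, ?_⟩
    · rw [hadj]
      exact CAL_of_M φ Φ hφ1 _ _ hS (fun j a ha b hb => (Fj j).mul_mem ha hb) hfree h1 h2
    · intro l hl hlen
      rcases l with _ | ⟨g, w⟩
      · simp at hlen
      rcases List.eq_nil_or_concat w with rfl | ⟨w, g', rfl⟩
      · simp at hlen
      · rw [List.concat_eq_append] at hl ⊢
        have hw' := (word_inr (cen φ fun i => (Ai i : Set B)) _ _).2 hl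
        rw [List.map_cons, List.map_append, List.map_cons, List.map_nil] at hw'
        rw [← h1 [] g (w.map inrL) g' [] hw']
        simp

end TypeBPrime
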